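/- Let A₁, A₂ ⊆ ℝⁿ be locally separated at a point y ∈ A₁ ∩ A₂, and let K₁ and K₂ be Boltyanski approximating cones to A₁ and A₂ at y, respectively. If at least one of the cones K₁, K₂ is not a linear subspace, then K₁ and K₂ are linearly separable: there exists a nonzero linear form p ∈ (ℝⁿ)* such that p·v₁ ≥ 0 for all v₁ ∈ K₁ and p·v₂ ≤ 0 for all v₂ ∈ K₂. -/

import Mathlib

open Set Metric Filter Asymptotics Topology

/-- A convex cone in a real vector space: contains `0`, is convex, and is
invariant under multiplication by nonnegative scalars. -/
def IsConvexCone {E : Type*} [AddCommMonoid E] [Module ℝ E] (C : Set E) : Prop :=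
  (0 : E) ∈ C ∧ Convex ℝ C ∧ ∀ r : ℝ, 0 ≤ r → ∀ c ∈ C, r • c ∈ C

/-- `K` is a Boltyanski approximating cone to `A` at `y`: there are `m : ℕ`, a convex cone
`C ⊆ ℝᵐ`, a linear map `L : ℝᵐ → E` with `K = L(C)`, a `δ > 0` and a continuous map
`F : C ∩ B_m(δ) → A` with `F 0 = y` and `F c = y + L c + o(c)`. -/
def IsBoltyanskiCone {E : Type*} [NormedAddCommGroup E] [NormedSpace ℝ E]
    (A : Set E) (y : E) (K : Set E) : Prop :=
  ∃ (m : ℕ) (C : Set (EuclideanSpace ℝ (Fin m)))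
    (L : EuclideanSpace ℝ (Fin m) →ₗ[ℝ] E) (δ : ℝ)
    (F : EuclideanSpace ℝ (Fin m) → E),
    IsConvexCone C ∧ K = ⇑L '' C ∧ 0 < δ ∧
    ContinuousOn F (C ∩ closedBall 0 δ) ∧
    (∀ c ∈ C ∩ closedBall 0 δ, F c ∈ A) ∧ F 0 = y ∧
    (fun c => F c - y - L c) =o[𝓝[C ∩ closedBall 0 δ] 0] (fun c => c)


/-- `A₁` and `A₂` are locally separated at `y` if some neighborhood `N` of `y`
satisfies `A₁ ∩ A₂ ∩ N = {y}`. -/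
def LocallySeparated {X : Type*} [TopologicalSpace X] (A₁ A₂ : Set X) (y : X) : Prop :=
  ∃ N ∈ nhds y, A₁ ∩ A₂ ∩ N = {y}

theorem lagrange_weights (n : ℕ) (t0 : ℝ) (ht0 : 0 < t0) :
    ∃ (w v : Fin (n+1) → ℝ), (∀ j, 0 < v j ∧ v j < t0) ∧ ∑ j, w j = 1 ∧
      ∀ P : Polynomial ℝ, P.natDegree ≤ n → P.eval 1 = ∑ j, w j * P.eval (v j) := by
  set v : Fin (n+1) → ℝ := fun j => t0 * ((j : ℝ) + 1) / (n + 2) with hv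
  have hinj : Function.Injective v := by
    intro i j hij
    simp only [hv] at hij
    have : (0:ℝ) < n + 2 := by positivity
    field_simp at hij
    have h2 : (i : ℝ) = j := by linarith
    exact Fin.ext (by exact_mod_cast h2)
  have key : ∀ P : Polynomial ℝ, P.natDegree ≤ n → P.eval 1 =
      ∑ j, (Lagrange.basis Finset.univ v j).eval 1 * P.eval (v j) := by
    intro P hP
    have h1 : P.degree < (Finset.univ : Finset (Fin (n+1))).card := by
      refine lt_of_le_of_lt Polynomial.degree_le_natDegree ?_
      simp only [Finset.card_univ, Fintype.card_fin]
      exact_mod_cast Nat.lt_succ_of_le hP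
    have h2 := Lagrange.eq_interpolate (s := Finset.univ) (v := v) hinj.injOn h1
    conv_lhs => rw [h2]
    rw [Lagrange.interpolate_apply, Polynomial.eval_finsetSum]
    simp [mul_comm]
  refine ⟨fun j => (Lagrange.basis Finset.univ v j).eval 1, v, fun j => ⟨by positivity, ?_⟩, ?_, key⟩
  · have h3 : ((j:ℕ):ℝ) + 1 < n + 2 := by
      have := j.2
      have : ((j:ℕ):ℝ) < n + 1 := by exact_mod_cast this
      linarith
    simp only [hv]
    rw [div_lt_iff₀ (by positivity)]
    exact mul_lt_mul_of_pos_left h3 ht0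
  · have := key 1 (by simp)
    simpa using this.symm

theorem det_poly {n : ℕ} (A : EuclideanSpace ℝ (Fin n) →L[ℝ] EuclideanSpace ℝ (Fin n)) :
    ∃ P : Polynomial ℝ, P.natDegree ≤ n ∧
      ∀ t : ℝ, (ContinuousLinearMap.id ℝ _ + t • A).det = P.eval t := by
  let b := (EuclideanSpace.basisFun (Fin n) ℝ).toBasis
  let M := LinearMap.toMatrix b b A.toLinearMap
  refine ⟨Matrix.det ((Polynomial.X : Polynomial ℝ) • M.map Polynomial.C
    + (1 : Matrix _ _ ℝ).map Polynomial.C), ?_, fun t => ?_⟩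
  · simpa using Polynomial.natDegree_det_X_add_C_le M 1
  · have h1 := RingHom.map_det (Polynomial.evalRingHom t)
      ((Polynomial.X : Polynomial ℝ) • M.map Polynomial.C + (1 : Matrix _ _ ℝ).map Polynomial.C)
    rw [Polynomial.coe_evalRingHom] at h1
    rw [h1]
    have h2 : (ContinuousLinearMap.id ℝ (EuclideanSpace ℝ (Fin n)) + t • A).det
        = (LinearMap.toMatrix b b (LinearMap.id + t • A.toLinearMap)).det := by
      rw [LinearMap.det_toMatrix]; rfl
    rw [h2]
    congr 1
    ext i j
    rw [map_add, map_smul, LinearMap.toMatrix_id]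
    simp only [Matrix.add_apply, Matrix.smul_apply, RingHom.mapMatrix_apply, Matrix.map_apply]
    by_cases hij : i = j <;> simp [M, Matrix.one_apply, hij] <;> ring

theorem singular_of_norm_one {n : ℕ} (r : EuclideanSpace ℝ (Fin n) → EuclideanSpace ℝ (Fin n))
    (hr : ContDiff ℝ 1 r) (h1 : ∀ x, ‖r x‖ = 1) (x : EuclideanSpace ℝ (Fin n)) :
    (fderiv ℝ r x).det = 0 := by
  by_contra hne
  have hd : HasFDerivAt r (fderiv ℝ r x) x := (hr.differentiable one_ne_zero x).hasFDerivAt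
  have h2 := hd.inner ℝ hd
  have h3 : (fun t => inner ℝ (r t) (r t)) = fun _ => (1:ℝ) := by
    funext t; rw [real_inner_self_eq_norm_sq, h1]; norm_num
  rw [h3] at h2
  have h4 := h2.unique (hasFDerivAt_const (1:ℝ) x)
  have hsurj : Function.Surjective (fderiv ℝ r x) := by
    have : LinearMap.det (fderiv ℝ r x).toLinearMap ≠ 0 := hne
    exact ((fderiv ℝ r x).toLinearMap.equivOfDetNeZero this).surjective
  obtain ⟨v, hv⟩ := hsurj (r x)
  have h5 := congrArg (fun T => T v) h4
  simp [hv, h1] at h5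

theorem surj_of_small {n : ℕ} (g : EuclideanSpace ℝ (Fin n) → EuclideanSpace ℝ (Fin n))
    (K : NNReal) (hg : LipschitzWith K g) (hK : K < 1) :
    Function.Bijective (fun x => x + g x) := by
  constructor
  · intro x y hxy
    simp only at hxy
    by_contra hne
    have h1 : x - y = g y - g x := by rw [sub_eq_sub_iff_add_eq_add, hxy, add_comm]
    have h2 := hg.dist_le_mul y x
    rw [dist_eq_norm, dist_eq_norm, ← h1, norm_sub_rev y x] at h2
    have h3 : 0 < ‖x - y‖ := norm_pos_iff.2 (sub_ne_zero.2 hne)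
    have h4 : (K:ℝ) < 1 := by exact_mod_cast hK
    nlinarith
  · intro y
    have hc : ContractingWith K (fun x => y - g x) := by
      refine ⟨hK, LipschitzWith.of_dist_le_mul fun a b => ?_⟩
      rw [dist_sub_left]; exact hg.dist_le_mul a b
    refine ⟨hc.fixedPoint, ?_⟩
    have := hc.fixedPoint_isFixedPt
    have h : y - g hc.fixedPoint = hc.fixedPoint := this
    simp only
    nth_rewrite 1 [← h]
    simp

theorem lip_ext {n : ℕ} (g : EuclideanSpace ℝ (Fin n) → EuclideanSpace ℝ (Fin n))
    (hg : ContDiff ℝ 1 g) (h0 : ∀ x, ‖x‖ = 1 → g x = 0) :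
    ∃ K : NNReal, LipschitzWith K ((closedBall 0 1).indicator g) := by
  have hcomp : IsCompact (closedBall (0 : EuclideanSpace ℝ (Fin n)) 1) := isCompact_closedBall _ _
  obtain ⟨K, hK⟩ : ∃ K, LipschitzOnWith K g (closedBall 0 1) :=
    (hg.locallyLipschitz.locallyLipschitzOn).exists_lipschitzOnWith_of_compact hcomp
  refine ⟨K, LipschitzWith.of_dist_le_mul ?_⟩
  have mixed : ∀ x y : EuclideanSpace ℝ (Fin n), x ∈ closedBall (0 : EuclideanSpace ℝ (Fin n)) 1 →
      y ∉ closedBall (0 : EuclideanSpace ℝ (Fin n)) 1 → dist (g x) 0 ≤ K * dist x y := by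
    intro x y hx hy
    rw [mem_closedBall_zero_iff] at hx hy
    have hcont : ContinuousOn (fun s : ℝ => ‖AffineMap.lineMap x y s‖) (Icc 0 1) := by
      have : Continuous (fun s : ℝ => (AffineMap.lineMap x y s : EuclideanSpace ℝ (Fin n))) :=
        AffineMap.lineMap_continuous
      exact this.norm.continuousOn
    have := intermediate_value_Icc (zero_le_one' ℝ) hcont
    obtain ⟨s, hs, hs1⟩ := this (show (1:ℝ) ∈ _ by simp; exact ⟨hx, by linarith⟩)
    set z : EuclideanSpace ℝ (Fin n) := AffineMap.lineMap x y s with hz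
    have hz1 : ‖z‖ = 1 := hs1
    have h2 := hK.dist_le_mul x (by simpa using hx) z (by simp [hz1])
    rw [h0 z hz1] at h2
    refine h2.trans ?_
    gcongr
    rw [hz, dist_left_lineMap]
    have : ‖s‖ ≤ 1 := by rw [Real.norm_of_nonneg hs.1]; exact hs.2
    exact mul_le_of_le_one_left dist_nonneg this
  intro x y
  by_cases hx : x ∈ closedBall (0 : EuclideanSpace ℝ (Fin n)) 1 <;>
  by_cases hy : y ∈ closedBall (0 : EuclideanSpace ℝ (Fin n)) 1
  · simp only [indicator_of_mem hx, indicator_of_mem hy]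
    exact hK.dist_le_mul x hx y hy
  · simp only [indicator_of_mem hx, indicator_of_notMem hy]
    exact mixed x y hx hy
  · simp only [indicator_of_notMem hx, indicator_of_mem hy]
    rw [dist_comm, dist_comm x]; exact mixed y x hy hx
  · simp only [indicator_of_notMem hx, indicator_of_notMem hy]
    simp; positivity

theorem no_retraction {n : ℕ} (r : EuclideanSpace ℝ (Fin n) → EuclideanSpace ℝ (Fin n))
    (hr : ContDiff ℝ 1 r) (h1 : ∀ x, ‖r x‖ = 1) (h2 : ∀ x, ‖x‖ = 1 → r x = x) : False := by
  set g : EuclideanSpace ℝ (Fin n) → EuclideanSpace ℝ (Fin n) := fun x => r x - x with hgdef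
  have hg : ContDiff ℝ 1 g := hr.sub contDiff_id
  have hg0 : ∀ x, ‖x‖ = 1 → g x = 0 := fun x hx => by simp [hgdef, h2 x hx]
  obtain ⟨K, hK⟩ := lip_ext g hg hg0
  have hcont : Continuous (fderiv ℝ g) := hg.continuous_fderiv one_ne_zero
  have hgd : ∀ x, HasFDerivAt g (fderiv ℝ g x) x :=
    fun x => (hg.differentiable one_ne_zero x).hasFDerivAt
  have hdetc : ∀ t : ℝ, Continuous fun x =>
      (ContinuousLinearMap.id ℝ (EuclideanSpace ℝ (Fin n)) + t • fderiv ℝ g x).det := fun t =>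
    ContinuousLinearMap.continuous_det.comp (continuous_const.add (hcont.const_smul t))
  have hcomp : IsCompact (closedBall (0 : EuclideanSpace ℝ (Fin n)) 1) := isCompact_closedBall _ _
  -- bound on the derivative
  obtain ⟨M, hM⟩ := hcomp.exists_bound_of_continuousOn hcont.continuousOn
  -- determinant near the identity
  obtain ⟨η, hη, hdet⟩ : ∃ η > 0, ∀ A : EuclideanSpace ℝ (Fin n) →L[ℝ] EuclideanSpace ℝ (Fin n),
      ‖A‖ < η → 0 < (ContinuousLinearMap.id ℝ _ + A).det := by
    have hc : Continuous fun A : EuclideanSpace ℝ (Fin n) →L[ℝ] EuclideanSpace ℝ (Fin n) =>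
        (ContinuousLinearMap.id ℝ _ + A).det :=
      ContinuousLinearMap.continuous_det.comp (continuous_const.add continuous_id)
    have h0 : 0 < (ContinuousLinearMap.id ℝ (EuclideanSpace ℝ (Fin n)) + 0).det := by
      rw [add_zero]
      have : (ContinuousLinearMap.id ℝ (EuclideanSpace ℝ (Fin n))).det = 1 := LinearMap.det_id
      rw [this]; norm_num
    have h3 := hc.continuousAt.eventually_mem (isOpen_Ioi.mem_nhds h0)
    obtain ⟨η, hη, h⟩ := Metric.eventually_nhds_iff.1 h3
    exact ⟨η, hη, fun A hA => h (by simpa using hA)⟩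
  set t0 : ℝ := min (1 / (K + 1)) (η / (|M| + 1)) with ht0
  have ht0pos : 0 < t0 := by positivity
  have hvol : ∀ t : ℝ, 0 < t → t < t0 →
      ∫ x in ball (0 : EuclideanSpace ℝ (Fin n)) 1,
        (ContinuousLinearMap.id ℝ (EuclideanSpace ℝ (Fin n)) + t • fderiv ℝ g x).det
      = ∫ x in ball (0 : EuclideanSpace ℝ (Fin n)) 1, (1:ℝ) := by
    intro t ht htt
    have htK : t * K < 1 := by
      have h3 : t < 1 / (K + 1) := htt.trans_le (min_le_left _ _)
      rw [lt_div_iff₀ (by positivity)] at h3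
      nlinarith
    have htM : t * (|M| + 1) < η := by
      have h3 : t < η / (|M| + 1) := htt.trans_le (min_le_right _ _)
      rwa [lt_div_iff₀ (by positivity)] at h3
    set G : EuclideanSpace ℝ (Fin n) → EuclideanSpace ℝ (Fin n) :=
      fun x => t • (closedBall 0 1).indicator g x with hG
    have hGl : LipschitzWith (t.toNNReal * K) G := by
      refine LipschitzWith.of_dist_le_mul fun x y => ?_
      have h3 := hK.dist_le_mul x y
      simp only [hG, dist_smul₀, NNReal.coe_mul, Real.coe_toNNReal t ht.le,
        Real.norm_of_nonneg ht.le, mul_assoc]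
      gcongr
    have hbij := surj_of_small G _ hGl (by
      rw [← NNReal.coe_lt_coe]; simpa [Real.coe_toNNReal t ht.le] using htK)
    have hball : ∀ x ∈ ball (0 : EuclideanSpace ℝ (Fin n)) 1, x + G x = x + t • g x := by
      intro x hx
      simp only [hG, indicator_of_mem (ball_subset_closedBall hx)]
    have hout : ∀ x ∈ (ball (0 : EuclideanSpace ℝ (Fin n)) 1)ᶜ, x + G x = x := by
      intro x hx
      by_cases hxc : x ∈ closedBall (0 : EuclideanSpace ℝ (Fin n)) 1
      · have : ‖x‖ = 1 := by
          simp at hx hxc; linarith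
        simp [hG, indicator_of_mem hxc, hg0 x this]
      · simp [hG, indicator_of_notMem hxc]
    have himg : (fun x => x + t • g x) '' ball 0 1 = ball 0 1 := by
      have e1 : (fun x => x + t • g x) '' ball 0 1 = (fun x => x + G x) '' ball 0 1 :=
        image_congr fun x hx => (hball x hx).symm
      have e2 : (fun x => x + G x) '' (ball 0 1)ᶜ = (ball 0 1)ᶜ := by
        rw [image_congr hout]; simp
      rw [image_compl_eq hbij, compl_inj_iff] at e2
      rw [e1, e2]
    have hinj : InjOn (fun x => x + t • g x) (ball 0 1) := by
      intro x hx y hy hxy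
      simp only [← hball x hx, ← hball y hy] at hxy
      exact hbij.1 hxy
    have hcv := MeasureTheory.integral_image_eq_integral_abs_det_fderiv_smul
      MeasureTheory.volume (s := ball (0 : EuclideanSpace ℝ (Fin n)) 1)
      (f := fun x => x + t • g x)
      (f' := fun x => ContinuousLinearMap.id ℝ (EuclideanSpace ℝ (Fin n)) + t • fderiv ℝ g x)
      measurableSet_ball
      (fun x _ => ((hasFDerivAt_id x).add ((hgd x).const_smul t)).hasFDerivWithinAt)
      hinj (fun _ => (1:ℝ))
    rw [himg] at hcv
    rw [hcv]
    refine MeasureTheory.setIntegral_congr_fun measurableSet_ball fun x hx => ?_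
    simp only [smul_eq_mul, mul_one]
    rw [abs_of_pos]
    apply hdet
    rw [norm_smul, Real.norm_of_nonneg ht.le]
    have h3 := hM x (ball_subset_closedBall hx)
    have h4 : ‖fderiv ℝ g x‖ ≤ |M| + 1 := by linarith [le_abs_self M]
    exact (mul_le_mul_of_nonneg_left h4 ht.le).trans_lt htM
  obtain ⟨w, v, hv, hw, hP⟩ := lagrange_weights n t0 ht0pos
  have hint : ∀ t : ℝ, MeasureTheory.IntegrableOn (fun x =>
      (ContinuousLinearMap.id ℝ (EuclideanSpace ℝ (Fin n)) + t • fderiv ℝ g x).det)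
      (ball (0 : EuclideanSpace ℝ (Fin n)) 1) := fun t =>
    ((hdetc t).continuousOn.integrableOn_compact hcomp).mono_set ball_subset_closedBall
  have hone : ∀ x, (ContinuousLinearMap.id ℝ (EuclideanSpace ℝ (Fin n))
      + (1:ℝ) • fderiv ℝ g x).det = 0 := by
    intro x
    have h3 : fderiv ℝ g x = fderiv ℝ r x - ContinuousLinearMap.id ℝ _ :=
      (((hr.differentiable one_ne_zero x).hasFDerivAt).sub (hasFDerivAt_id x)).fderiv
    rw [one_smul, h3, add_sub_cancel]
    exact singular_of_norm_one r hr h1 x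
  have hsum : ∀ x, ∑ j, w j * (ContinuousLinearMap.id ℝ (EuclideanSpace ℝ (Fin n))
      + v j • fderiv ℝ g x).det = 0 := by
    intro x
    obtain ⟨P, hPd, hPe⟩ := det_poly (fderiv ℝ g x)
    rw [← hone x, hPe 1, hP P hPd]
    simp only [hPe]
  have hfin : ∑ j, w j * ∫ x in ball (0 : EuclideanSpace ℝ (Fin n)) 1,
      (ContinuousLinearMap.id ℝ (EuclideanSpace ℝ (Fin n)) + v j • fderiv ℝ g x).det = 0 := by
    simp only [← MeasureTheory.integral_const_mul]
    rw [← MeasureTheory.integral_finsetSum _ (fun j _ => (hint (v j)).const_mul (w j))]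
    simp [hsum]
  simp only [fun j => hvol (v j) (hv j).1 (hv j).2] at hfin
  rw [← Finset.sum_mul, hw, one_mul] at hfin
  have hpos : 0 < MeasureTheory.volume.real (ball (0 : EuclideanSpace ℝ (Fin n)) 1) :=
    ENNReal.toReal_pos (measure_ball_pos _ _ one_pos).ne' MeasureTheory.measure_ball_lt_top.ne
  simp at hfin
  exact hpos.ne' hfin

theorem exists_zero {n : ℕ} (e : EuclideanSpace ℝ (Fin n) → EuclideanSpace ℝ (Fin n))
    (he : Continuous e) (hb : ∀ x, ‖e x‖ ≤ 1 / 4) : ∃ x, x + e x = 0 := by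
  by_contra! hne
  set χ : EuclideanSpace ℝ (Fin n) → ℝ := fun x => max 0 (min 1 (2 - 4 * ‖x‖)) with hχ
  have hχc : Continuous χ := by fun_prop
  set e' : EuclideanSpace ℝ (Fin n) → EuclideanSpace ℝ (Fin n) := fun x => χ x • e x with he'
  have he'c : Continuous e' := hχc.smul he
  have hχ0 : ∀ x, 1 / 2 ≤ ‖x‖ → e' x = 0 := by
    intro x hx
    have : χ x = 0 := max_eq_left ((min_le_right _ _).trans (by linarith))
    simp [he', this]
  have hne' : ∀ x, x + e' x ≠ 0 := by
    intro x hx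
    by_cases h : ‖x‖ ≤ 1 / 4
    · have : χ x = 1 := by
        simp only [hχ]
        rw [min_eq_left (by linarith), max_eq_right zero_le_one]
      apply hne x
      simpa [he', this] using hx
    · have h1 : ‖χ x‖ ≤ 1 := by
        rw [Real.norm_of_nonneg (le_max_left _ _)]
        exact max_le zero_le_one (min_le_left _ _)
      have h2 : ‖x‖ = ‖e' x‖ := by
        have h4 := congrArg norm (eq_neg_of_add_eq_zero_left hx)
        rwa [norm_neg] at h4
      have h3 : ‖e' x‖ ≤ 1 / 4 := by
        simp only [he', norm_smul]
        nlinarith [hb x, norm_nonneg (e x)]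
      linarith
  let t : EuclideanSpace ℝ (Fin n) → Set (EuclideanSpace ℝ (Fin n)) := fun y =>
    if ‖y‖ < 1 then ball (e' y) ‖y + e' y‖ else {0}
  have htc : ∀ x, Convex ℝ (t x) := by
    intro x
    simp only [t]
    split_ifs
    · exact convex_ball _ _
    · exact convex_singleton _
  obtain ⟨g, hg⟩ := exists_contMDiffMap_forall_mem_convex_of_local_const (n := 1)
    (modelWithCornersSelf ℝ (EuclideanSpace ℝ (Fin n))) htc (by
      intro x
      by_cases hx : ‖x‖ < 1
      · refine ⟨e' x, ?_⟩
        have h1 : ∀ᶠ y in 𝓝 x, ‖y‖ < 1 := continuous_norm.continuousAt.eventually_lt_const hx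
        have h2 : ∀ᶠ y in 𝓝 x, dist (e' x) (e' y) < ‖y + e' y‖ := by
          apply ContinuousAt.eventually_lt
          · exact (continuous_const.dist he'c).continuousAt
          · exact (continuous_id.add he'c).norm.continuousAt
          · rw [dist_self]; exact norm_pos_iff.2 (hne' x)
        filter_upwards [h1, h2] with y hy1 hy2
        simp only [t, if_pos hy1]
        exact hy2
      · refine ⟨0, ?_⟩
        have h1 : ∀ᶠ y in 𝓝 x, 1 / 2 < ‖y‖ :=
          continuous_norm.continuousAt.eventually_const_lt (by linarith)
        filter_upwards [h1] with y hy
        simp only [t]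
        split_ifs
        · rw [hχ0 y hy.le]; simp
          intro h; rw [h] at hy; simp at hy; linarith
        · simp)
  have hgc : ContDiff ℝ 1 g := contMDiff_iff_contDiff.1 g.contMDiff
  have hh : ∀ x, x + g x ≠ 0 := by
    intro x hx
    have h1 := hg x
    simp only [t] at h1
    split_ifs at h1 with h2
    · rw [eq_neg_of_add_eq_zero_right hx, mem_ball, dist_eq_norm, ← norm_neg] at h1
      have : -(-x - e' x) = x + e' x := by abel
      rw [this] at h1
      exact lt_irrefl _ h1
    · rw [mem_singleton_iff] at h1
      rw [h1, add_zero] at hx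
      simp [hx] at h2
  have hhc : ContDiff ℝ 1 (fun x => x + g x) := contDiff_id.add hgc
  refine no_retraction (fun x => ‖x + g x‖⁻¹ • (x + g x)) ?_ ?_ ?_
  · exact ((hhc.norm ℝ hh).inv (fun x => norm_ne_zero_iff.2 (hh x))).smul hhc
  · intro x
    rw [norm_smul, norm_inv, norm_norm, inv_mul_cancel₀ (norm_ne_zero_iff.2 (hh x))]
  · intro x hx
    have h1 := hg x
    simp [t, hx] at h1
    simp [h1, hx]

theorem IsConvexCone.add_mem {E : Type*} [AddCommGroup E] [Module ℝ E] {C : Set E}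
    (hC : IsConvexCone C) {x y : E} (hx : x ∈ C) (hy : y ∈ C) : x + y ∈ C := by
  have h := hC.2.1 hx hy (show (0:ℝ) ≤ 1/2 by norm_num) (show (0:ℝ) ≤ 1/2 by norm_num)
    (by norm_num)
  have h2 := hC.2.2 2 (by norm_num) _ h
  rwa [smul_add, smul_smul, smul_smul, show (2:ℝ) * (1/2) = 1 by norm_num, one_smul,
    one_smul] at h2

theorem IsConvexCone.sum_mem {E ι : Type*} [AddCommGroup E] [Module ℝ E] {C : Set E}
    (hC : IsConvexCone C) (s : Finset ι) (f : ι → E) (hf : ∀ i, f i ∈ C) : ∑ i ∈ s, f i ∈ C := by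
  classical
  induction s using Finset.induction_on with
  | empty => simpa using hC.1
  | insert a s ha ih => rw [Finset.sum_insert ha]; exact hC.add_mem (hf a) ih

/-- A convex cone of a finite dimensional space which is not everything is contained in a
half space. -/
theorem cone_halfspace {n : ℕ} (K : Set (EuclideanSpace ℝ (Fin n))) (hK : IsConvexCone K)
    (hne : K ≠ univ) : ∃ p : Module.Dual ℝ (EuclideanSpace ℝ (Fin n)), p ≠ 0 ∧ ∀ v ∈ K, 0 ≤ p v := by
  by_cases hint : (interior K).Nonempty
  · obtain ⟨x, hx⟩ := (ne_univ_iff_exists_notMem K).1 hne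
    obtain ⟨f, hf0, hf⟩ := geometric_hahn_banach_of_nonempty_interior_point hK.2.1
      (fun h => hx (interior_subset h)) hint
    refine ⟨-f.toLinearMap, ?_, ?_⟩
    · intro h
      apply hf0
      ext v
      have := congrArg (fun T => T v) h
      simpa using this
    · intro v hv
      by_contra! h
      simp at h
      have h1 := hf _ (hK.2.2 ((|f x| + 1) / f v) (by positivity) v hv)
      rw [map_smul, smul_eq_mul, div_mul_cancel₀ _ h.ne'] at h1
      linarith [le_abs_self (f x)]
  · rw [hK.2.1.interior_nonempty_iff_affineSpan_eq_top] at hint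
    have h1 : Submodule.span ℝ K < ⊤ := by
      rw [lt_top_iff_ne_top]
      intro h
      apply hint
      rw [AffineSubspace.affineSpan_eq_top_iff_vectorSpan_eq_top_of_nonempty ℝ _ _ ⟨0, hK.1⟩,
        vectorSpan_eq_span_vsub_set_right ℝ hK.1]
      simpa using h
    obtain ⟨f, hf0, hf⟩ := Submodule.exists_le_ker_of_lt_top _ h1
    exact ⟨f, hf0, fun v hv => (LinearMap.mem_ker.1 (hf (Submodule.subset_span hv))).ge⟩

/-- Uniform first order estimate. -/
theorem uniform_estimate {n m : ℕ} {C : Set (EuclideanSpace ℝ (Fin m))}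
    {L : EuclideanSpace ℝ (Fin m) →ₗ[ℝ] EuclideanSpace ℝ (Fin n)} {δ : ℝ}
    {F : EuclideanSpace ℝ (Fin m) → EuclideanSpace ℝ (Fin n)} {y : EuclideanSpace ℝ (Fin n)}
    (hC : IsConvexCone C) (hδ : 0 < δ)
    (ho : (fun c => F c - y - L c) =o[𝓝[C ∩ closedBall 0 δ] 0] (fun c => c))
    (M κ : ℝ) (hM : 0 < M) (hκ : 0 < κ) :
    ∃ ε₀ > 0, ∀ ε, 0 < ε → ε < ε₀ → ∀ c ∈ C, ‖c‖ ≤ M →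
      ε • c ∈ C ∩ closedBall 0 δ ∧ ‖F (ε • c) - y - ε • L c‖ ≤ κ * ε := by
  have h1 := ho.def (show 0 < κ / M by positivity)
  rw [eventually_nhdsWithin_iff, Metric.eventually_nhds_iff] at h1
  obtain ⟨ρ, hρ, h⟩ := h1
  refine ⟨min (δ / M) (ρ / M), by positivity, fun ε hε hlt c hc hcM => ?_⟩
  have h2 : ε * M < δ := (lt_div_iff₀ hM).1 (hlt.trans_le (min_le_left _ _))
  have h3 : ε * M < ρ := (lt_div_iff₀ hM).1 (hlt.trans_le (min_le_right _ _))
  have h4 : ‖ε • c‖ ≤ ε * M := by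
    rw [norm_smul, Real.norm_of_nonneg hε.le]; gcongr
  have h5 : ε • c ∈ C ∩ closedBall 0 δ := ⟨hC.2.2 ε hε.le c hc, by simpa using h4.trans h2.le⟩
  refine ⟨h5, ?_⟩
  have h6 := h (y := ε • c) (by simpa using h4.trans_lt h3) h5
  rw [map_smul] at h6
  refine h6.trans ?_
  calc κ / M * ‖ε • c‖ ≤ κ / M * (ε * M) := by gcongr
    _ = κ * ε := by field_simp

/-- Continuous selection of preimages in a cone. -/
theorem section_map {n m : ℕ} {C : Set (EuclideanSpace ℝ (Fin m))} (hC : IsConvexCone C)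
    (p q : Fin n → EuclideanSpace ℝ (Fin m)) (hp : ∀ i, p i ∈ C) (hq : ∀ i, q i ∈ C) :
    ∃ σ : EuclideanSpace ℝ (Fin n) → EuclideanSpace ℝ (Fin m), Continuous σ ∧ (∀ u, σ u ∈ C) ∧
      ∀ u, σ u = ∑ i, (max (u i) 0 • p i + max (-u i) 0 • q i) := by
  refine ⟨fun u => ∑ i, (max (u i) 0 • p i + max (-u i) 0 • q i), by fun_prop, fun u => ?_,
    fun u => rfl⟩
  exact hC.sum_mem _ _ fun i => hC.add_mem (hC.2.2 _ (le_max_right _ _) _ (hp i))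
    (hC.2.2 _ (le_max_right _ _) _ (hq i))

/-- Two transversal cones with a common nonzero vector: the sets meet near `y` outside `y`. -/
theorem exists_common_point {n m₁ m₂ : ℕ}
    {C₁ : Set (EuclideanSpace ℝ (Fin m₁))} {C₂ : Set (EuclideanSpace ℝ (Fin m₂))}
    {L₁ : EuclideanSpace ℝ (Fin m₁) →ₗ[ℝ] EuclideanSpace ℝ (Fin n)}
    {L₂ : EuclideanSpace ℝ (Fin m₂) →ₗ[ℝ] EuclideanSpace ℝ (Fin n)} {δ₁ δ₂ : ℝ}
    {F₁ : EuclideanSpace ℝ (Fin m₁) → EuclideanSpace ℝ (Fin n)}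
    {F₂ : EuclideanSpace ℝ (Fin m₂) → EuclideanSpace ℝ (Fin n)} {y : EuclideanSpace ℝ (Fin n)}
    (hC₁ : IsConvexCone C₁) (hδ₁ : 0 < δ₁) (hF₁ : ContinuousOn F₁ (C₁ ∩ closedBall 0 δ₁))
    (ho₁ : (fun c => F₁ c - y - L₁ c) =o[𝓝[C₁ ∩ closedBall 0 δ₁] 0] (fun c => c))
    (hC₂ : IsConvexCone C₂) (hδ₂ : 0 < δ₂) (hF₂ : ContinuousOn F₂ (C₂ ∩ closedBall 0 δ₂))
    (ho₂ : (fun c => F₂ c - y - L₂ c) =o[𝓝[C₂ ∩ closedBall 0 δ₂] 0] (fun c => c))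
    (htr : ∀ u, ∃ a ∈ C₁, ∃ b ∈ C₂, L₁ a - L₂ b = u)
    (c₁ : EuclideanSpace ℝ (Fin m₁)) (c₂ : EuclideanSpace ℝ (Fin m₂)) (hc₁ : c₁ ∈ C₁)
    (hc₂ : c₂ ∈ C₂) (hcc : L₁ c₁ = L₂ c₂) (hw : L₁ c₁ ≠ 0) (ν : ℝ) (hν : 0 < ν) :
    ∃ a ∈ C₁ ∩ closedBall 0 δ₁, ∃ b ∈ C₂ ∩ closedBall 0 δ₂, F₁ a = F₂ b ∧ F₁ a ≠ y ∧
      dist (F₁ a) y < ν := by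
  choose α hα β hβ hαβ using htr
  let E : Fin n → EuclideanSpace ℝ (Fin n) := fun i => EuclideanSpace.single i (1:ℝ)
  obtain ⟨σ₁, hσ₁c, hσ₁C, hσ₁⟩ := section_map hC₁ (fun i => α (E i)) (fun i => α (-E i))
    (fun i => hα _) (fun i => hα _)
  obtain ⟨σ₂, hσ₂c, hσ₂C, hσ₂⟩ := section_map hC₂ (fun i => β (E i)) (fun i => β (-E i))
    (fun i => hβ _) (fun i => hβ _)
  have hsec : ∀ u, L₁ (σ₁ u) - L₂ (σ₂ u) = u := by
    intro u
    rw [hσ₁, hσ₂, map_sum, map_sum, ← Finset.sum_sub_distrib]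
    have h1 : ∀ i, L₁ (max (u i) 0 • α (E i) + max (-u i) 0 • α (-E i))
        - L₂ (max (u i) 0 • β (E i) + max (-u i) 0 • β (-E i)) = u i • E i := by
      intro i
      have h2 : u i = max (u i) 0 - max (-u i) 0 := by
        rcases le_total (u i) 0 with h | h
        · rw [max_eq_right h, max_eq_left (by linarith)]; ring
        · rw [max_eq_left h, max_eq_right (by linarith)]; ring
      have h3 := hαβ (E i)
      have h4 := hαβ (-E i)
      calc _ = max (u i) 0 • (L₁ (α (E i)) - L₂ (β (E i)))
            + max (-u i) 0 • (L₁ (α (-E i)) - L₂ (β (-E i))) := by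
              simp only [map_add, map_smul]; module
        _ = (max (u i) 0 - max (-u i) 0) • E i := by rw [h3, h4]; module
        _ = u i • E i := by rw [← h2]
    simp only [h1]
    ext j
    simp [E, Pi.single_apply]
  -- clamp
  let P : EuclideanSpace ℝ (Fin n) → EuclideanSpace ℝ (Fin n) := fun u => (max 1 ‖u‖)⁻¹ • u
  have hPc : Continuous P :=
    ((continuous_const.max continuous_norm).inv₀ fun u => by positivity).smul continuous_id
  have hPb : ∀ u, P u ∈ closedBall (0 : EuclideanSpace ℝ (Fin n)) 1 := by
    intro u
    rw [mem_closedBall_zero_iff, norm_smul, norm_inv, Real.norm_of_nonneg (by positivity),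
      inv_mul_le_one₀ (by positivity)]
    exact le_max_right _ _
  have hPid : ∀ u, ‖u‖ ≤ 1 → P u = u := by
    intro u hu
    simp [P, max_eq_left hu]
  have hcomp : IsCompact (closedBall (0 : EuclideanSpace ℝ (Fin n)) 1) := isCompact_closedBall _ _
  obtain ⟨B₁, hB₁⟩ := hcomp.exists_bound_of_continuousOn hσ₁c.continuousOn
  obtain ⟨B₂, hB₂⟩ := hcomp.exists_bound_of_continuousOn hσ₂c.continuousOn
  obtain ⟨B₃, hB₃⟩ := hcomp.exists_bound_of_continuousOn
    ((L₁.continuous_of_finiteDimensional).comp hσ₁c).continuousOn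
  set W := ‖L₁ c₁‖ with hW
  have hWpos : 0 < W := norm_pos_iff.2 hw
  set r : ℝ := min 1 (W / (4 * (|B₃| + 1))) with hr
  have hrpos : 0 < r := by positivity
  have hr1 : r ≤ 1 := min_le_left _ _
  have hrB : r * (|B₃| + 1) ≤ W / 4 := by
    have h1 : r ≤ W / (4 * (|B₃| + 1)) := min_le_right _ _
    rw [le_div_iff₀ (by positivity)] at h1
    linarith
  set κ : ℝ := min (r / 8) (W / 4) with hκ
  have hκpos : 0 < κ := by positivity
  have hκr : κ ≤ r / 8 := min_le_left _ _
  have hκW : κ ≤ W / 4 := min_le_right _ _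
  obtain ⟨ε₁, hε₁, H₁⟩ := uniform_estimate hC₁ hδ₁ ho₁ (‖c₁‖ + |B₁| + 1) κ (by positivity) hκpos
  obtain ⟨ε₂, hε₂, H₂⟩ := uniform_estimate hC₂ hδ₂ ho₂ (‖c₂‖ + |B₂| + 1) κ (by positivity) hκpos
  obtain ⟨ε, hε, hεlt⟩ := exists_between (show 0 < min (min ε₁ ε₂) (ν / (2 * W)) by positivity)
  have hlt₁ : ε < ε₁ := hεlt.trans_le ((min_le_left _ _).trans (min_le_left _ _))
  have hlt₂ : ε < ε₂ := hεlt.trans_le ((min_le_left _ _).trans (min_le_right _ _))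
  have hltν : ε * (2 * W) < ν := (lt_div_iff₀ (by positivity)).1 (hεlt.trans_le (min_le_right _ _))
  let a : EuclideanSpace ℝ (Fin n) → EuclideanSpace ℝ (Fin m₁) := fun u => c₁ + r • σ₁ (P u)
  let b : EuclideanSpace ℝ (Fin n) → EuclideanSpace ℝ (Fin m₂) := fun u => c₂ + r • σ₂ (P u)
  have haC : ∀ u, a u ∈ C₁ := fun u => hC₁.add_mem hc₁ (hC₁.2.2 r hrpos.le _ (hσ₁C _))
  have hbC : ∀ u, b u ∈ C₂ := fun u => hC₂.add_mem hc₂ (hC₂.2.2 r hrpos.le _ (hσ₂C _))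
  have haM : ∀ u, ‖a u‖ ≤ ‖c₁‖ + |B₁| + 1 := by
    intro u
    have h1 := norm_add_le c₁ (r • σ₁ (P u))
    rw [norm_smul, Real.norm_of_nonneg hrpos.le] at h1
    have h2 := hB₁ _ (hPb u)
    have h3 : r * ‖σ₁ (P u)‖ ≤ ‖σ₁ (P u)‖ := mul_le_of_le_one_left (norm_nonneg _) hr1
    have h4 := le_abs_self B₁
    exact h1.trans (by linarith)
  have hbM : ∀ u, ‖b u‖ ≤ ‖c₂‖ + |B₂| + 1 := by
    intro u
    have h1 := norm_add_le c₂ (r • σ₂ (P u))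
    rw [norm_smul, Real.norm_of_nonneg hrpos.le] at h1
    have h2 := hB₂ _ (hPb u)
    have h3 : r * ‖σ₂ (P u)‖ ≤ ‖σ₂ (P u)‖ := mul_le_of_le_one_left (norm_nonneg _) hr1
    have h4 := le_abs_self B₂
    exact h1.trans (by linarith)
  have hac : Continuous a := continuous_const.add ((hσ₁c.comp hPc).const_smul r)
  have hbc : Continuous b := continuous_const.add ((hσ₂c.comp hPc).const_smul r)
  have A₁ := fun u => H₁ ε hε hlt₁ (a u) (haC u) (haM u)
  have A₂ := fun u => H₂ ε hε hlt₂ (b u) (hbC u) (hbM u)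
  have hG₁ : Continuous fun u => F₁ (ε • a u) :=
    hF₁.comp_continuous (hac.const_smul ε) fun u => (A₁ u).1
  have hG₂ : Continuous fun u => F₂ (ε • b u) :=
    hF₂.comp_continuous (hbc.const_smul ε) fun u => (A₂ u).1
  have hlin : ∀ u, L₁ (a u) - L₂ (b u) = r • P u := by
    intro u
    simp only [a, b, map_add, map_smul, hcc]
    rw [add_sub_add_left_eq_sub, ← smul_sub, hsec]
  have hbd : ∀ u, ‖(ε * r)⁻¹ • (F₁ (ε • a u) - F₂ (ε • b u)) - P u‖ ≤ 1 / 4 := by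
      intro u
      have h1 : (ε * r)⁻¹ • (F₁ (ε • a u) - F₂ (ε • b u)) - P u
          = (ε * r)⁻¹ • ((F₁ (ε • a u) - y - ε • L₁ (a u))
            - (F₂ (ε • b u) - y - ε • L₂ (b u))) := by
        have h2 : P u = (ε * r)⁻¹ • (ε • (L₁ (a u) - L₂ (b u))) := by
          rw [hlin, smul_smul ε r, smul_smul, inv_mul_cancel₀ (mul_pos hε hrpos).ne', one_smul]
        rw [h2]; module
      rw [h1, norm_smul, norm_inv, Real.norm_of_nonneg (by positivity),
        inv_mul_le_iff₀ (by positivity)]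
      refine (norm_sub_le _ _).trans ?_
      have h3 := (A₁ u).2
      have h4 := (A₂ u).2
      nlinarith
  obtain ⟨u, hu⟩ := exists_zero
    (fun u => (ε * r)⁻¹ • (F₁ (ε • a u) - F₂ (ε • b u)) - P u)
    (((hG₁.sub hG₂).const_smul (ε * r)⁻¹).sub hPc) hbd
  have hu1 : ‖u‖ ≤ 1 := by
    have h1 := congrArg norm (eq_neg_of_add_eq_zero_left hu)
    rw [norm_neg] at h1
    have h2 := hbd u
    rw [h1]
    linarith
  rw [hPid u hu1, add_sub_cancel] at hu
  have heq : F₁ (ε • a u) = F₂ (ε • b u) := by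
    rcases smul_eq_zero.1 hu with h | h
    · exact absurd h (by positivity)
    · exact sub_eq_zero.1 h
  set R := F₁ (ε • a u) - y - ε • L₁ (a u) with hR
  set S := r • L₁ (σ₁ (P u)) with hS
  have hRn : ‖R‖ ≤ κ * ε := (A₁ u).2
  have hSn : ‖S‖ ≤ W / 4 := by
    rw [hS, norm_smul, Real.norm_of_nonneg hrpos.le]
    have h1 : ‖L₁ (σ₁ (P u))‖ ≤ B₃ := hB₃ _ (hPb u)
    have h2 : ‖L₁ (σ₁ (P u))‖ ≤ |B₃| + 1 := by linarith [le_abs_self B₃]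
    exact (mul_le_mul_of_nonneg_left h2 hrpos.le).trans hrB
  have hexp : F₁ (ε • a u) - y = ε • L₁ c₁ + (ε • S + R) := by
    have h1 : L₁ (a u) = L₁ c₁ + S := by simp only [a, map_add, map_smul, hS]
    rw [hR, h1]; module
  have hrest : ‖ε • S + R‖ ≤ ε * (W / 2) := by
    refine (norm_add_le _ _).trans ?_
    rw [norm_smul, Real.norm_of_nonneg hε.le]
    nlinarith
  have hmain : ‖ε • L₁ c₁‖ = ε * W := by rw [norm_smul, Real.norm_of_nonneg hε.le]
  have hεW : 0 < ε * W := by positivity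
  refine ⟨ε • a u, (A₁ u).1, ε • b u, (A₂ u).1, heq, ?_, ?_⟩
  · intro h
    rw [h, sub_self] at hexp
    have h1 := congrArg norm (eq_neg_of_add_eq_zero_left hexp.symm)
    rw [norm_neg, hmain] at h1
    linarith
  · rw [dist_eq_norm, hexp]
    refine (norm_add_le _ _).trans_lt ?_
    rw [hmain]
    linarith

theorem image_cone_submodule {n m : ℕ} {C : Set (EuclideanSpace ℝ (Fin m))} (hC : IsConvexCone C)
    (L : EuclideanSpace ℝ (Fin m) →ₗ[ℝ] EuclideanSpace ℝ (Fin n))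
    (hneg : ∀ a ∈ C, ∃ a' ∈ C, L a' = -L a) :
    ∃ S : Submodule ℝ (EuclideanSpace ℝ (Fin n)), ⇑L '' C = ↑S := by
  refine ⟨{ carrier := ⇑L '' C, add_mem' := ?_, zero_mem' := ⟨0, hC.1, by simp⟩,
            smul_mem' := ?_ }, rfl⟩
  · rintro _ _ ⟨a, ha, rfl⟩ ⟨b, hb, rfl⟩
    exact ⟨a + b, hC.add_mem ha hb, by simp⟩
  · rintro t _ ⟨a, ha, rfl⟩
    rcases le_total 0 t with ht | ht
    · exact ⟨t • a, hC.2.2 t ht a ha, by simp⟩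
    · obtain ⟨a', ha', h⟩ := hneg a ha
      exact ⟨(-t) • a', hC.2.2 (-t) (by linarith) a' ha', by rw [map_smul, h]; module⟩

/-- If two sets are locally separated at `y`, and one of two Boltyanski approximating
cones at `y` is not a linear subspace, then the cones are linearly separable. -/
theorem linearly_separable_of_locally_separated {n : ℕ}
    (A₁ A₂ K₁ K₂ : Set (EuclideanSpace ℝ (Fin n))) (y : EuclideanSpace ℝ (Fin n))
    (hy : y ∈ A₁ ∩ A₂)
    (hsep : LocallySeparated A₁ A₂ y)
    (h₁ : IsBoltyanskiCone A₁ y K₁) (h₂ : IsBoltyanskiCone A₂ y K₂)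
    (hns : (¬ ∃ S : Submodule ℝ (EuclideanSpace ℝ (Fin n)), K₁ = ↑S) ∨
           (¬ ∃ S : Submodule ℝ (EuclideanSpace ℝ (Fin n)), K₂ = ↑S)) :
    ∃ p : Module.Dual ℝ (EuclideanSpace ℝ (Fin n)), p ≠ 0 ∧
      (∀ v ∈ K₁, 0 ≤ p v) ∧ (∀ v ∈ K₂, p v ≤ 0) := by
  obtain ⟨N, hN, hNeq⟩ := hsep
  obtain ⟨m₁, C₁, L₁, δ₁, F₁, hC₁, rfl, hδ₁, hF₁, hA₁, hy₁, ho₁⟩ := h₁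
  obtain ⟨m₂, C₂, L₂, δ₂, F₂, hC₂, rfl, hδ₂, hF₂, hA₂, hy₂, ho₂⟩ := h₂
  by_cases htr : ∀ u, ∃ a ∈ C₁, ∃ b ∈ C₂, L₁ a - L₂ b = u
  · exfalso
    -- a common nonzero vector
    have hcommon : ∃ c₁ ∈ C₁, ∃ c₂ ∈ C₂, L₁ c₁ = L₂ c₂ ∧ L₁ c₁ ≠ 0 := by
      by_contra! hno
      have hneg₁ : ∀ a ∈ C₁, ∃ a' ∈ C₁, L₁ a' = -L₁ a := by
        intro a ha
        obtain ⟨a', ha', b, hb, hab⟩ := htr (-L₁ a)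
        refine ⟨a', ha', ?_⟩
        have h1 : L₁ (a' + a) = L₂ b := by
          rw [map_add, ← sub_eq_zero, ← sub_eq_zero.2 hab]; abel
        have h2 := hno _ (hC₁.add_mem ha' ha) b hb h1
        rw [map_add] at h2
        exact eq_neg_of_add_eq_zero_left h2
      have hneg₂ : ∀ b ∈ C₂, ∃ b' ∈ C₂, L₂ b' = -L₂ b := by
        intro b hb
        obtain ⟨a, ha, b', hb', hab⟩ := htr (L₂ b)
        refine ⟨b', hb', ?_⟩
        have h1 : L₁ a = L₂ (b' + b) := by
          rw [map_add, ← sub_eq_zero, ← sub_eq_zero.2 hab]; abel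
        have h2 := hno a ha _ (hC₂.add_mem hb' hb) h1
        rw [h1, map_add] at h2
        exact eq_neg_of_add_eq_zero_left h2
      rcases hns with h | h
      · exact h (image_cone_submodule hC₁ L₁ hneg₁)
      · exact h (image_cone_submodule hC₂ L₂ hneg₂)
    obtain ⟨c₁, hc₁, c₂, hc₂, hcc, hw⟩ := hcommon
    obtain ⟨ν, hν, hball⟩ := Metric.mem_nhds_iff.1 hN
    obtain ⟨a, ha, b, hb, hab, hne, hd⟩ := exists_common_point hC₁ hδ₁ hF₁ ho₁ hC₂ hδ₂ hF₂ ho₂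
      htr c₁ c₂ hc₁ hc₂ hcc hw ν hν
    have hmem : F₁ a ∈ A₁ ∩ A₂ ∩ N := ⟨⟨hA₁ a ha, hab ▸ hA₂ b hb⟩, hball hd⟩
    rw [hNeq] at hmem
    exact hne hmem
  · obtain ⟨p, hp0, hp⟩ := cone_halfspace {v | ∃ a ∈ C₁, ∃ b ∈ C₂, L₁ a - L₂ b = v}
      ⟨⟨0, hC₁.1, 0, hC₂.1, by simp⟩, by
        rintro _ ⟨a, ha, b, hb, rfl⟩ _ ⟨a', ha', b', hb', rfl⟩ s t hs ht hst
        refine ⟨s • a + t • a', hC₁.2.1 ha ha' hs ht hst, s • b + t • b',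
          hC₂.2.1 hb hb' hs ht hst, ?_⟩
        simp only [map_add, map_smul]; module, by
        rintro t ht _ ⟨a, ha, b, hb, rfl⟩
        exact ⟨t • a, hC₁.2.2 t ht a ha, t • b, hC₂.2.2 t ht b hb, by
          simp only [map_smul]; module⟩⟩
      (fun h => htr fun u => by
        have : u ∈ (univ : Set (EuclideanSpace ℝ (Fin n))) := mem_univ u
        rwa [← h] at this)
    refine ⟨p, hp0, ?_, ?_⟩
    · rintro _ ⟨a, ha, rfl⟩
      exact hp _ ⟨a, ha, 0, hC₂.1, by simp⟩
    · rintro _ ⟨b, hb, rfl⟩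
      have := hp (-L₂ b) ⟨0, hC₁.1, b, hb, by simp⟩
      simpa using this
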